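/- Elliptic binomial coefficients via intertwining vectors: let k ≥ 1 and 0 ≤ n ≤ k be integers, let a, b, c ∈ ℤ with b − c = k − 2n and min(b,c) > k, assume r is irrational and u ∈ ℂ is such that every bracket appearing in a denominator (in the dual intertwining vectors along all paths from b to c and in C_n^k) is nonzero. Then Σ_{μ ∈ {−k,−k+2,…,k}} ψ*^{(k)}_μ(u)^c_b · ψ^{(k)}_μ(u)^a_{a+k} = C_n^k(α,β,γ), where α = (−u+a−k+1)/2, β = (−u+b−k+1)/2, γ = (−u−b−k+1)/2. -/

import Mathlib

noncomputable section

open Complex Finset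

namespace Ell

/-- `x^s = exp(-iπ s /(r τ))`. -/
def xp (τ : ℂ) (r : ℝ) (s : ℂ) : ℂ :=
  Complex.exp (-Complex.I * (Real.pi : ℂ) * s / ((r : ℂ) * τ))

/-- `Θ_p(z) = ∏_{j ≥ 0} (1 - z p^j)(1 - p^{j+1}/z)(1 - p^{j+1})`. -/
def Theta (p z : ℂ) : ℂ :=
  ∏' j : ℕ, ((1 - z * p ^ j) * (1 - p ^ (j + 1) / z) * (1 - p ^ (j + 1)))

/-- The bracket `[u] = x^{u²/r - u} Θ_p(x^{2u})` with `p = x^{2r}`. -/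
def br (τ : ℂ) (r : ℝ) (u : ℂ) : ℂ :=
  xp τ r (u ^ 2 / (r : ℂ) - u) * Theta (xp τ r (2 * (r : ℂ))) (xp τ r (2 * u))

/-- Elliptic shifted factorial `[u]_n = ∏_{j=0}^{n-1} [u+j]`. -/
def brF (τ : ℂ) (r : ℝ) (u : ℂ) (n : ℕ) : ℂ :=
  ∏ j ∈ Finset.range n, br τ r (u + (j : ℂ))

/-- Elliptic binomial coefficient `C_n^k(α,β,γ)`. -/
def Cnk (τ : ℂ) (r : ℝ) (k n : ℕ) (α β γ : ℂ) : ℂ :=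
  brF τ r 1 k / (brF τ r 1 n * brF τ r 1 (k - n)) *
    (brF τ r (α - γ) n * brF τ r (α + γ + (k : ℂ) - (n : ℂ)) n *
      brF τ r (α - β) (k - n) * brF τ r (α + β + (n : ℂ)) (k - n)) /
    (brF τ r (β - γ + (n : ℂ) - (k : ℂ)) n * brF τ r (γ - β - (n : ℂ)) (k - n) *
      brF τ r (β + γ) k)

/-- The elliptic 6j-symbol `R_n^m(α,β,γ,δ;k)`. -/
def Rnm (τ : ℂ) (r : ℝ) (k n m : ℕ) (α β γ δ : ℂ) : ℂ :=
  ∑ j ∈ Finset.range (min n m + 1),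
    Cnk τ r n j α γ (β + (k : ℂ) - (n : ℂ)) * Cnk τ r (k - j) (m - j) β (γ + (j : ℂ)) δ

/-- Terminating very-well-poised elliptic hypergeometric sum with explicit
truncation `N`:  `Σ_{j=0}^N ([u₀+2j]/[u₀]) ([u₀]_j/[1]_j) ∏ᵢ [uᵢ]_j/[u₀+1-uᵢ]_j`. -/
def Vsum (τ : ℂ) (r : ℝ) (u₀ : ℂ) (us : List ℂ) (N : ℕ) : ℂ :=
  ∑ j ∈ Finset.range (N + 1),
    br τ r (u₀ + 2 * (j : ℂ)) / br τ r u₀ * (brF τ r u₀ j / brF τ r 1 j) *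
      (us.map fun ui => brF τ r ui j / brF τ r (u₀ + 1 - ui) j).prod

/-- "Every bracket appearing in a denominator of `C_n^k(·,β,γ)` is nonzero". -/
def CdenomNZ (τ : ℂ) (r : ℝ) (k n : ℕ) (β γ : ℂ) : Prop :=
  brF τ r 1 n ≠ 0 ∧ brF τ r 1 (k - n) ≠ 0 ∧
    brF τ r (β - γ + (n : ℂ) - (k : ℂ)) n ≠ 0 ∧
    brF τ r (γ - β - (n : ℂ)) (k - n) ≠ 0 ∧ brF τ r (β + γ) k ≠ 0

/-- "Every bracket appearing in a denominator of `R_n^m(α,β,γ,δ;k)` is nonzero". -/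
def RdenomNZ (τ : ℂ) (r : ℝ) (k n m : ℕ) (β γ δ : ℂ) : Prop :=
  ∀ j ≤ min n m,
    CdenomNZ τ r n j γ (β + (k : ℂ) - (n : ℂ)) ∧
      CdenomNZ τ r (k - j) (m - j) (γ + (j : ℂ)) δ

/-- Jacobi theta `ϑ₁(v|σ)`. -/
def th1 (v σ : ℂ) : ℂ :=
  2 * Complex.exp (2 * (Real.pi : ℂ) * Complex.I * σ / 8) *
    (∏' n : ℕ, (1 - Complex.exp (2 * (Real.pi : ℂ) * Complex.I * σ) ^ (n + 1))) *
    Complex.sin ((Real.pi : ℂ) * v) *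
    ∏' n : ℕ,
      (1 - 2 * Complex.exp (2 * (Real.pi : ℂ) * Complex.I * σ) ^ (n + 1) *
            Complex.cos (2 * (Real.pi : ℂ) * v) +
        Complex.exp (2 * (Real.pi : ℂ) * Complex.I * σ) ^ (2 * (n + 1)))

/-- Jacobi theta `ϑ₀(v|σ)`. -/
def th0 (v σ : ℂ) : ℂ :=
  -Complex.I * Complex.exp ((Real.pi : ℂ) * Complex.I * (v + σ / 4)) * th1 (v + σ / 2) σ

/-- Jacobi theta `ϑ₂(v|σ)`. -/
def th2 (v σ : ℂ) : ℂ := th1 (v + 1 / 2) σ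

/-- Jacobi theta `ϑ₃(v|σ)`. -/
def th3 (v σ : ℂ) : ℂ :=
  Complex.exp ((Real.pi : ℂ) * Complex.I * (v + σ / 4)) * th1 (v + (σ + 1) / 2) σ

/-- Intertwining vector component `ψ_ε(u)^a_b`, `ε ∈ {1, -1}`. -/
def psi (τ : ℂ) (r : ℝ) (u : ℂ) (ε : ℤ) (a b : ℤ) : ℂ :=
  if ε = 1 then th0 ((((a : ℂ) - (b : ℂ)) * u + (a : ℂ)) / (2 * (r : ℂ))) (τ / 2)
  else th3 ((((a : ℂ) - (b : ℂ)) * u + (a : ℂ)) / (2 * (r : ℂ))) (τ / 2)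

/-- The constant `C = x^{-r/4} e^{-iπ/4} τ^{1/2}`. -/
def Cc (τ : ℂ) (r : ℝ) : ℂ :=
  xp τ r (-(r : ℂ) / 4) * Complex.exp (-(Real.pi : ℂ) * Complex.I / 4) * τ ^ (1 / 2 : ℂ)

/-- Dual intertwining vector component `ψ*_ε(u)^a_b = -ε(a-b) C² ψ_{-ε}(u-1)^a_b/(2[b][u])`. -/
def psiStar (τ : ℂ) (r : ℝ) (u : ℂ) (ε : ℤ) (a b : ℤ) : ℂ :=
  -(ε : ℂ) * ((a : ℂ) - (b : ℂ)) * Cc τ r ^ 2 * psi τ r (u - 1) (-ε) a b /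
    (2 * br τ r (b : ℂ) * br τ r u)

/-- Sign attached to a boolean. -/
def sg (b : Bool) : ℤ := if b then 1 else -1

/-- Canonical path from `a`: up for `j ≤ n`, down afterwards. -/
def cpathZ (a n : ℤ) (j : ℕ) : ℤ := if (j : ℤ) ≤ n then a + j else a + 2 * n - j

/-- Admissibility: `a - b ∈ {-k, -k+2, …, k}`. -/
def adm (k : ℕ) (a b : ℤ) : Prop := (a - b).natAbs ≤ k ∧ (a - b - (k : ℤ)) % 2 = 0

instance (k : ℕ) (a b : ℤ) : Decidable (adm k a b) := by unfold adm; infer_instance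

/-- Fused intertwining vector component `ψ^{(k)}_μ(u)^a_b` (zero if `a,b` not admissible). -/
def psiF (τ : ℂ) (r : ℝ) (k : ℕ) (μ : ℤ) (u : ℂ) (a b : ℤ) : ℂ :=
  if adm k a b then
    ∑ ε ∈ Finset.univ.filter fun ε : Fin k → Bool => (∑ j, sg (ε j)) = μ,
      ∏ j : Fin k,
        psi τ r (u + (k : ℂ) - (((j : ℕ) + 1 : ℕ) : ℂ)) (sg (ε j))
          (cpathZ a (((k : ℤ) - (a - b)) / 2) (j : ℕ))
          (cpathZ a (((k : ℤ) - (a - b)) / 2) ((j : ℕ) + 1))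
  else 0

/-- Partial-sum path attached to a sign sequence `δ`, starting at `a`. -/
def spath (k : ℕ) (a : ℤ) (δ : Fin k → Bool) (j : ℕ) : ℤ :=
  a + ∑ i ∈ Finset.range j, if h : i < k then sg (δ ⟨i, h⟩) else 0

/-- Fused dual intertwining vector component `ψ*^{(k)}_μ(u)^b_a`
(sum over all admissible paths from `a` to `b`; zero if not admissible). -/
def psiStarF (τ : ℂ) (r : ℝ) (k : ℕ) (μ : ℤ) (u : ℂ) (b a : ℤ) : ℂ :=
  if adm k a b then
    ∑ δ ∈ Finset.univ.filter fun δ : Fin k → Bool => (∑ j, sg (δ j)) = b - a,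
      ∏ j : Fin k,
        psiStar τ r (u + (k : ℂ) - (((j : ℕ) + 1 : ℕ) : ℂ))
          (if ((j : ℕ) + 1 : ℤ) ≤ ((k : ℤ) + μ) / 2 then 1 else -1)
          (spath k a δ ((j : ℕ) + 1)) (spath k a δ (j : ℕ))
  else 0

/-- The `L`-matrix `L^{(k)}(a,b;c,d|u) = Σ_μ ψ*^{(k)}_μ(u)^d_c ψ^{(k)}_μ(u)^a_b`. -/
def Lk (τ : ℂ) (r : ℝ) (k : ℕ) (u : ℂ) (a b c d : ℤ) : ℂ :=
  ∑ i ∈ Finset.range (k + 1),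
    psiStarF τ r k ((k : ℤ) - 2 * (i : ℤ)) u d c * psiF τ r k ((k : ℤ) - 2 * (i : ℤ)) u a b

/-- Normalized face weight `W̄(a,b;d,c|u)` (arguments ordered (NW, NE; SW, SE)). -/
def Wb (τ : ℂ) (r : ℝ) (u : ℂ) (a b d c : ℤ) : ℂ :=
  if b = a + 1 ∧ d = a + 1 ∧ c = a + 2 then 1
  else if b = a - 1 ∧ d = a - 1 ∧ c = a - 2 then 1
  else if b = a + 1 ∧ d = a + 1 ∧ c = a then
    br τ r ((a : ℂ) - u) * br τ r 1 / (br τ r (a : ℂ) * br τ r (1 + u))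
  else if b = a - 1 ∧ d = a - 1 ∧ c = a then
    br τ r ((a : ℂ) + u) * br τ r 1 / (br τ r (a : ℂ) * br τ r (1 + u))
  else if b = a + 1 ∧ d = a - 1 ∧ c = a then
    br τ r ((a : ℂ) + 1) * br τ r u / (br τ r (a : ℂ) * br τ r (1 + u))
  else if b = a - 1 ∧ d = a + 1 ∧ c = a then
    br τ r ((a : ℂ) - 1) * br τ r u / (br τ r (a : ℂ) * br τ r (1 + u))
  else 0

/-- Sequence with prescribed endpoints `d`, `c` and free interior values `f`. -/
def seqI (k : ℕ) (d c : ℤ) (f : Fin (k - 1) → ℤ) (j : ℕ) : ℤ :=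
  if h0 : j = 0 then d
  else if hj : j < k then f ⟨j - 1, by omega⟩ else c

/-- Fused face weight `W^{(k,1)}(a,b;d,c|u)`. -/
def Wk1 (τ : ℂ) (r : ℝ) (k : ℕ) (u : ℂ) (a b d c : ℤ) : ℂ :=
  if adm k a b then
    ∑' f : Fin (k - 1) → ℤ,
      ∏ j ∈ Finset.range k,
        Wb τ r (u + (k : ℂ) - ((j : ℂ) + 1))
          (cpathZ a (((k : ℤ) - (a - b)) / 2) j)
          (cpathZ a (((k : ℤ) - (a - b)) / 2) (j + 1))
          (seqI k d c f j) (seqI k d c f (j + 1))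
  else 0

/-- Fused face weight `W^{(k,l)}(a,b;d,c|u)`. -/
def Wkl (τ : ℂ) (r : ℝ) (k l : ℕ) (u : ℂ) (a b d c : ℤ) : ℂ :=
  if adm l b c then
    ∑' g : Fin (l - 1) → ℤ,
      ∏ i ∈ Finset.range l,
        Wk1 τ r k (u - (l : ℂ) + ((i : ℂ) + 1))
          (seqI l a d g i) (cpathZ b (((l : ℤ) - (b - c)) / 2) i)
          (seqI l a d g (i + 1)) (cpathZ b (((l : ℤ) - (b - c)) / 2) (i + 1))
  else 0

/-- Eight-vertex weight `ā(u)`. -/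
def aw (τ : ℂ) (r : ℝ) (u : ℂ) : ℂ :=
  th2 (1 / (2 * (r : ℂ))) (τ / 2) * th2 (u / (2 * (r : ℂ))) (τ / 2) /
    (th2 0 (τ / 2) * th2 ((1 + u) / (2 * (r : ℂ))) (τ / 2))

/-- Eight-vertex weight `b̄(u)`. -/
def bw (τ : ℂ) (r : ℝ) (u : ℂ) : ℂ :=
  th2 (1 / (2 * (r : ℂ))) (τ / 2) * th1 (u / (2 * (r : ℂ))) (τ / 2) /
    (th2 0 (τ / 2) * th1 ((1 + u) / (2 * (r : ℂ))) (τ / 2))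

/-- Eight-vertex weight `c̄(u)`. -/
def cw (τ : ℂ) (r : ℝ) (u : ℂ) : ℂ :=
  th1 (1 / (2 * (r : ℂ))) (τ / 2) * th2 (u / (2 * (r : ℂ))) (τ / 2) /
    (th2 0 (τ / 2) * th1 ((1 + u) / (2 * (r : ℂ))) (τ / 2))

/-- Eight-vertex weight `d̄(u)`. -/
def dw (τ : ℂ) (r : ℝ) (u : ℂ) : ℂ :=
  -(th1 (1 / (2 * (r : ℂ))) (τ / 2) * th1 (u / (2 * (r : ℂ))) (τ / 2)) /
    (th2 0 (τ / 2) * th2 ((1 + u) / (2 * (r : ℂ))) (τ / 2))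

/-- The normalized eight-vertex `R`-matrix entry `R̄(u)_{(ε₁,ε₂),(ε₁',ε₂')}`. -/
def Rbar (τ : ℂ) (r : ℝ) (u : ℂ) (e1 e2 e1' e2' : ℤ) : ℂ :=
  if e1' = e1 ∧ e2' = e2 ∧ e1 = e2 then aw τ r u
  else if e1' = e1 ∧ e2' = e2 ∧ e1 = -e2 then bw τ r u
  else if e1' = e2 ∧ e2' = e1 ∧ e1 = -e2 then cw τ r u
  else if e1' = -e1 ∧ e2' = -e2 ∧ e1 = e2 then dw τ r u
  else 0

/-- Sklyanin standard-basis vector `v_+(z)`. -/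
def vp (τ z : ℂ) : ℂ := th3 (2 * z) (2 * τ) - th2 (2 * z) (2 * τ)

/-- Sklyanin standard-basis vector `v_-(z)`. -/
def vm (τ z : ℂ) : ℂ := th3 (2 * z) (2 * τ) + th2 (2 * z) (2 * τ)

/-!
The triple product and the modular transformation of the theta series give `[u] = C ϑ₁(u/r | τ)`.
Hence the `2 × 2` determinant formed by `ϑ₀` and `ϑ₃` at modulus `τ/2`, which is a product of two
`ϑ₁` at modulus `τ`, evaluates in brackets. This has three consequences. The contraction of one step
of the dual path with one step of the straight path `a → a + 1` is a ratio of brackets; the sum of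
products of dual vectors over all paths depends only on the number of signs of each kind, so that
the fused contraction is the path sum of the one-step contractions; and the Plücker relation between
`2 × 2` minors is the Weierstrass identity for `[u]`. The path sum satisfies a Pascal recursion,
obtained by removing its first step, and by the Weierstrass identity so does `C_n^k`.
-/

/-! ### The Jacobi triple product -/

section TripleProduct

open Filter
open scoped Topology Real

/-- The `q`-factorial `(p; p)_m` with base `p`. -/
def qFactorial (p : ℂ) (m : ℕ) : ℂ := ∏ i ∈ range m, (1 - p ^ (i + 1))

/-- The reciprocal `q`-factorial `1 / (p; p)_m`. Extending it by zero to `m < 0` makes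
`invQFactorial_sub_one` hold for every integer. -/
def invQFactorial (p : ℂ) (m : ℤ) : ℂ := if 0 ≤ m then (qFactorial p m.toNat)⁻¹ else 0

/-- The `p`-binomial coefficient of `2N` over `N + n`, for `n : ℤ`: the weight of
`thetaTerm p z n` in the `N`-th partial product of the triple product. -/
def centralQBinom (p : ℂ) (N : ℕ) (n : ℤ) : ℂ :=
  qFactorial p (2 * N) * invQFactorial p (N - n) * invQFactorial p (N + n)

/-- The general term `(-1)^n p^{n(n-1)/2} z^n` of the Laurent expansion of `Theta p z`. -/
def thetaTerm (p z : ℂ) (n : ℤ) : ℂ := (-1) ^ n * p ^ (n * (n - 1) / 2) * z ^ n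

variable {p z : ℂ}

lemma one_sub_pow_succ_ne_zero (hp : ‖p‖ < 1) (i : ℕ) : 1 - p ^ (i + 1) ≠ 0 := fun h =>
  (pow_lt_one₀ (norm_nonneg p) hp i.succ_ne_zero).ne <| by
    rw [← norm_pow, ← sub_eq_zero.mp h, norm_one]

lemma qFactorial_succ (p : ℂ) (m : ℕ) :
    qFactorial p (m + 1) = qFactorial p m * (1 - p ^ (m + 1)) :=
  prod_range_succ _ _

lemma invQFactorial_natCast (p : ℂ) (m : ℕ) : invQFactorial p m = (qFactorial p m)⁻¹ := by
  simp [invQFactorial]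

lemma invQFactorial_of_neg (p : ℂ) {m : ℤ} (hm : m < 0) : invQFactorial p m = 0 :=
  if_neg hm.not_ge

lemma invQFactorial_sub_one (hp : ‖p‖ < 1) (m : ℤ) :
    invQFactorial p (m - 1) = (1 - p ^ m) * invQFactorial p m := by
  rcases lt_trichotomy m 0 with hm | rfl | hm
  · rw [invQFactorial_of_neg p hm, invQFactorial_of_neg p (by lia), mul_zero]
  · simp [invQFactorial_of_neg]
  · obtain ⟨j, rfl⟩ : ∃ j : ℕ, m = (j + 1 : ℕ) := ⟨(m - 1).toNat, by lia⟩
    rw [show ((j + 1 : ℕ) : ℤ) - 1 = j by lia, invQFactorial_natCast, invQFactorial_natCast,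
      qFactorial_succ, zpow_natCast]
    have := one_sub_pow_succ_ne_zero hp j
    field_simp

lemma thetaTerm_add_one (hp0 : p ≠ 0) (hz : z ≠ 0) (n : ℤ) :
    thetaTerm p z (n + 1) = -(z * p ^ n) * thetaTerm p z n := by
  have hexp : (n + 1) * (n + 1 - 1) / 2 = n * (n - 1) / 2 + n := by
    rw [show (n + 1) * (n + 1 - 1) = n * (n - 1) + n * 2 by ring,
      Int.add_mul_ediv_right _ _ two_ne_zero]
  rw [thetaTerm, thetaTerm, hexp, zpow_add_one₀ (by norm_num), zpow_add₀ hp0, zpow_add_one₀ hz]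
  ring

lemma centralQBinom_zero (p : ℂ) (n : ℤ) : centralQBinom p 0 n = if n = 0 then 1 else 0 := by
  rcases lt_trichotomy n 0 with hn | rfl | hn
  · simp [centralQBinom, invQFactorial_of_neg p hn, hn.ne]
  · simp [centralQBinom, invQFactorial, qFactorial]
  · simp [centralQBinom, invQFactorial_of_neg p (neg_neg_of_pos hn), hn.ne']

lemma centralQBinom_succ (hp : ‖p‖ < 1) (hp0 : p ≠ 0) (N : ℕ) (n : ℤ) :
    centralQBinom p (N + 1) n = (1 + p ^ (2 * N + 1)) * centralQBinom p N n
      + p ^ ((N : ℤ) + 1 - n) * centralQBinom p N (n - 1)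
      + p ^ ((N : ℤ) + 1 + n) * centralQBinom p N (n + 1) := by
  have lower := invQFactorial_sub_one hp ((N : ℤ) + 1 - n)
  have lower' := invQFactorial_sub_one hp ((N : ℤ) - n)
  have upper := invQFactorial_sub_one hp ((N : ℤ) + 1 + n)
  have upper' := invQFactorial_sub_one hp ((N : ℤ) + n)
  rw [show (N : ℤ) + 1 - n - 1 = N - n by ring] at lower
  rw [show (N : ℤ) + 1 + n - 1 = N + n by ring] at upper
  have hX : p ^ ((N : ℤ) + 1 - n) = p ^ ((N : ℤ) - n) * p := by
    rw [← zpow_add_one₀ hp0]; congr 1; ring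
  have hY : p ^ ((N : ℤ) + 1 + n) = p ^ ((N : ℤ) + n) * p := by
    rw [← zpow_add_one₀ hp0]; congr 1; ring
  have hXY : p ^ (2 * N) = p ^ ((N : ℤ) - n) * p ^ ((N : ℤ) + n) := by
    rw [← zpow_add₀ hp0, ← zpow_natCast]; congr 1; push_cast; ring
  unfold centralQBinom
  rw [show 2 * (N + 1) = 2 * N + 1 + 1 by ring, qFactorial_succ, qFactorial_succ,
    show (N : ℤ) - (n - 1) = N + 1 - n by ring, show (N : ℤ) + (n - 1) = N + n - 1 by ring,
    show (N : ℤ) - (n + 1) = N - n - 1 by ring, show (N : ℤ) + (n + 1) = N + 1 + n by ring,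
    Nat.cast_succ, lower', upper', lower, upper, hX, hY,
    pow_succ p (2 * N + 1), pow_succ p (2 * N), hXY]
  ring

lemma centralQBinom_succ_mul_thetaTerm (hp : ‖p‖ < 1) (hp0 : p ≠ 0) (hz : z ≠ 0) (N : ℕ) (n : ℤ) :
    centralQBinom p (N + 1) n * thetaTerm p z n =
      (1 + p ^ (2 * N + 1)) * (centralQBinom p N n * thetaTerm p z n)
        + -(z * p ^ N) * (centralQBinom p N (n - 1) * thetaTerm p z (n - 1))
        + -(p ^ (N + 1) / z) * (centralQBinom p N (n + 1) * thetaTerm p z (n + 1)) := by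
  have hpred := thetaTerm_add_one hp0 hz (n - 1)
  rw [sub_add_cancel] at hpred
  have hsub : p ^ ((N : ℤ) + 1 - n) * p ^ (n - 1) = p ^ N := by
    rw [← zpow_add₀ hp0, ← zpow_natCast]; congr 1; ring
  have hadd : p ^ ((N : ℤ) + 1 + n) = p ^ (N + 1) * p ^ n := by
    rw [zpow_add₀ hp0, ← zpow_natCast p (N + 1), Nat.cast_succ]
  have hn : p ^ n = p ^ (n - 1) * p := by rw [← zpow_add_one₀ hp0, sub_add_cancel]
  rw [centralQBinom_succ hp hp0, thetaTerm_add_one hp0 hz n, hpred, hadd, hn, ← hsub]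
  field_simp
  ring

lemma hasSum_centralQBinom_mul_thetaTerm (hp : ‖p‖ < 1) (hp0 : p ≠ 0) (hz : z ≠ 0) (N : ℕ) :
    HasSum (fun n : ℤ => centralQBinom p N n * thetaTerm p z n)
      (∏ j ∈ range N, ((1 - z * p ^ j) * (1 - p ^ (j + 1) / z))) := by
  induction N with
  | zero =>
    rw [prod_range_zero]
    convert hasSum_ite_eq (0 : ℤ) (1 : ℂ) using 2 with n
    rcases eq_or_ne n 0 with rfl | hn
    · simp [centralQBinom_zero, thetaTerm]
    · simp [centralQBinom_zero, hn]
  | succ N ih =>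
    have same := ih.mul_left (1 + p ^ (2 * N + 1))
    have pred := ((Equiv.subRight (1 : ℤ)).hasSum_iff.mpr ih).mul_left (-(z * p ^ N))
    have succ := ((Equiv.addRight (1 : ℤ)).hasSum_iff.mpr ih).mul_left (-(p ^ (N + 1) / z))
    convert (same.add pred).add succ using 1
    · rfl
    · exact funext fun n => centralQBinom_succ_mul_thetaTerm hp hp0 hz N n
    · rw [prod_range_succ]
      field_simp
      ring

lemma multipliable_one_sub_mul_pow (hp : ‖p‖ < 1) (c : ℂ) :
    Multipliable fun j : ℕ => 1 - c * p ^ j := by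
  simp only [sub_eq_add_neg]
  refine multipliable_one_add_of_summable ?_
  simpa only [norm_neg, norm_mul, norm_pow] using
    (summable_geometric_of_lt_one (norm_nonneg p) hp).mul_left ‖c‖

lemma multipliable_one_sub_pow_succ_div (hp : ‖p‖ < 1) (z : ℂ) :
    Multipliable fun j : ℕ => 1 - p ^ (j + 1) / z :=
  (multipliable_one_sub_mul_pow hp (p / z)).congr fun j => by ring

lemma multipliable_one_sub_pow_succ (hp : ‖p‖ < 1) : Multipliable fun j : ℕ => 1 - p ^ (j + 1) := by
  simpa only [div_one] using multipliable_one_sub_pow_succ_div hp 1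

lemma tprod_one_sub_pow_succ_ne_zero (hp : ‖p‖ < 1) : ∏' j : ℕ, (1 - p ^ (j + 1)) ≠ 0 := by
  simp only [sub_eq_add_neg]
  refine tprod_one_add_ne_zero_of_summable (fun j => ?_) ?_
  · simpa only [sub_eq_add_neg] using one_sub_pow_succ_ne_zero hp j
  · simpa only [norm_neg, norm_pow] using
      (summable_nat_add_iff 1).mpr (summable_geometric_of_lt_one (norm_nonneg p) hp)

lemma Theta_eq_tprod_mul_tprod (hp : ‖p‖ < 1) (z : ℂ) :
    Theta p z = (∏' j : ℕ, ((1 - z * p ^ j) * (1 - p ^ (j + 1) / z))) *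
      ∏' j : ℕ, (1 - p ^ (j + 1)) :=
  ((multipliable_one_sub_mul_pow hp z).mul (multipliable_one_sub_pow_succ_div hp z)).tprod_mul
    (multipliable_one_sub_pow_succ hp)

lemma tendsto_qFactorial (hp : ‖p‖ < 1) :
    Tendsto (qFactorial p) atTop (𝓝 (∏' j : ℕ, (1 - p ^ (j + 1)))) :=
  (multipliable_one_sub_pow_succ hp).tendsto_prod_tprod_nat

lemma tendsto_invQFactorial_add (hp : ‖p‖ < 1) (n : ℤ) :
    Tendsto (fun N : ℕ => invQFactorial p (N + n)) atTop (𝓝 (∏' j : ℕ, (1 - p ^ (j + 1)))⁻¹) := by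
  have hshift : Tendsto (fun N : ℕ => ((N : ℤ) + n).toNat) atTop atTop :=
    tendsto_atTop.mpr fun b => by
      filter_upwards [eventually_ge_atTop (b + n.natAbs)] with N hN
      lia
  refine (((tendsto_qFactorial hp).inv₀ (tprod_one_sub_pow_succ_ne_zero hp)).comp hshift).congr' ?_
  filter_upwards [eventually_ge_atTop n.natAbs] with N hN
  rw [invQFactorial, if_pos (by lia), Function.comp_apply]

lemma exists_norm_invQFactorial_le (hp : ‖p‖ < 1) : ∃ B, ∀ m, ‖invQFactorial p m‖ ≤ B := by
  obtain ⟨B, hB⟩ := (((tendsto_qFactorial hp).inv₀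
    (tprod_one_sub_pow_succ_ne_zero hp)).norm).bddAbove_range
  refine ⟨B, fun m => ?_⟩
  rcases lt_or_ge m 0 with hm | hm
  · rw [invQFactorial_of_neg p hm, norm_zero]
    exact (norm_nonneg _).trans (hB ⟨0, rfl⟩)
  · rw [invQFactorial, if_pos hm]
    exact hB ⟨_, rfl⟩

lemma exists_norm_centralQBinom_le (hp : ‖p‖ < 1) : ∃ B, ∀ N n, ‖centralQBinom p N n‖ ≤ B := by
  obtain ⟨A, hA⟩ := (tendsto_qFactorial hp).norm.bddAbove_range
  obtain ⟨B, hB⟩ := exists_norm_invQFactorial_le hp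
  refine ⟨A * B * B, fun N n => ?_⟩
  have hA' : ‖qFactorial p (2 * N)‖ ≤ A := hA ⟨_, rfl⟩
  have hB0 : 0 ≤ B := (norm_nonneg _).trans (hB 0)
  rw [centralQBinom, norm_mul, norm_mul]
  gcongr
  exacts [mul_nonneg ((norm_nonneg _).trans hA') hB0, (norm_nonneg _).trans hA', hB _, hB _]

lemma tendsto_centralQBinom (hp : ‖p‖ < 1) (n : ℤ) :
    Tendsto (fun N => centralQBinom p N n) atTop (𝓝 (∏' j : ℕ, (1 - p ^ (j + 1)))⁻¹) := by
  have hdouble : Tendsto (fun N : ℕ => 2 * N) atTop atTop := tendsto_id.const_mul_atTop' two_pos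
  have := (((tendsto_qFactorial hp).comp hdouble).mul (tendsto_invQFactorial_add hp (-n))).mul
    (tendsto_invQFactorial_add hp n)
  rwa [mul_inv_cancel₀ (tprod_one_sub_pow_succ_ne_zero hp), one_mul] at this

lemma norm_exp_two_pi_I_mul_lt_one_iff {σ : ℂ} : ‖cexp (2 * π * I * σ)‖ < 1 ↔ 0 < σ.im := by
  have hre : (2 * π * I * σ).re = -(2 * π * σ.im) := by simp
  rw [norm_exp, Real.exp_lt_one_iff, hre, neg_lt_zero, mul_pos_iff_of_pos_left Real.two_pi_pos]

lemma thetaTerm_exp (σ v : ℂ) (n : ℤ) :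
    thetaTerm (cexp (2 * π * I * σ)) (cexp (2 * π * I * v)) n =
      jacobiTheta₂_term n (v + 1 / 2 - σ / 2) σ := by
  obtain ⟨m, hm⟩ := Int.even_mul_pred_self n
  have hdiv : n * (n - 1) / 2 = m := by lia
  have hcast : (n : ℂ) * (n - 1) = m + m := mod_cast congrArg (Int.cast : ℤ → ℂ) hm
  rw [thetaTerm, jacobiTheta₂_term, hdiv, ← exp_pi_mul_I, ← exp_int_mul, ← exp_int_mul,
    ← exp_int_mul, ← exp_add, ← exp_add]
  congr 1
  linear_combination (-π * I * σ) * hcast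

lemma exists_exp_two_pi_I_mul_eq (hz : z ≠ 0) : ∃ v, cexp (2 * π * I * v) = z :=
  ⟨log z / (2 * π * I), by rw [mul_div_cancel₀ _ two_pi_I_ne_zero, exp_log hz]⟩

lemma summable_thetaTerm (hp : ‖p‖ < 1) (hp0 : p ≠ 0) (hz : z ≠ 0) :
    Summable (thetaTerm p z) := by
  obtain ⟨σ, rfl⟩ := exists_exp_two_pi_I_mul_eq hp0
  obtain ⟨v, rfl⟩ := exists_exp_two_pi_I_mul_eq hz
  exact ((summable_jacobiTheta₂_term_iff _ _).mpr (norm_exp_two_pi_I_mul_lt_one_iff.mp hp)).congr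
    fun n => (thetaTerm_exp σ v n).symm

theorem jacobi_triple_product (hp : ‖p‖ < 1) (hp0 : p ≠ 0) (hz : z ≠ 0) :
    Theta p z = ∑' n, thetaTerm p z n := by
  set P := ∏' j : ℕ, (1 - p ^ (j + 1))
  obtain ⟨B, hB⟩ := exists_norm_centralQBinom_le hp
  have hseries : Tendsto (fun N => ∑' n, centralQBinom p N n * thetaTerm p z n) atTop
      (𝓝 (∑' n, P⁻¹ * thetaTerm p z n)) := by
    refine tendsto_tsum_of_dominated_convergence ((summable_thetaTerm hp hp0 hz).norm.mul_left B)
      (fun n => (tendsto_centralQBinom hp n).mul_const _) (.of_forall fun N n => ?_)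
    rw [norm_mul]
    exact mul_le_mul_of_nonneg_right (hB N n) (norm_nonneg _)
  have hprod := ((multipliable_one_sub_mul_pow hp z).mul
    (multipliable_one_sub_pow_succ_div hp z)).tendsto_prod_tprod_nat
  have heq := tendsto_nhds_unique hseries <|
    hprod.congr fun N => (hasSum_centralQBinom_mul_thetaTerm hp hp0 hz N).tsum_eq.symm
  rw [Theta_eq_tprod_mul_tprod hp, ← heq, tsum_mul_left, mul_comm,
    mul_inv_cancel_left₀ (tprod_one_sub_pow_succ_ne_zero hp)]

end TripleProduct

/-! ### Jacobi theta functions -/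

section JacobiTheta

open scoped Real

lemma Theta_exp_eq_jacobiTheta₂ {σ : ℂ} (hσ : 0 < σ.im) (v : ℂ) :
    Theta (cexp (2 * π * I * σ)) (cexp (2 * π * I * v)) = jacobiTheta₂ (v + 1 / 2 - σ / 2) σ := by
  rw [jacobi_triple_product (norm_exp_two_pi_I_mul_lt_one_iff.mpr hσ) (exp_ne_zero _)
    (exp_ne_zero _)]
  exact tsum_congr fun n => thetaTerm_exp σ v n

lemma Theta_eq_one_sub_mul {p z : ℂ} (hp : ‖p‖ < 1) (hz : z ≠ 0) :
    Theta p z = (1 - z) * (∏' n : ℕ, (1 - p ^ (n + 1))) *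
      ∏' n : ℕ, (1 - 2 * p ^ (n + 1) * ((z + z⁻¹) / 2) + p ^ (2 * (n + 1))) := by
  have hshift : Multipliable fun j : ℕ => 1 - z * p ^ (j + 1) :=
    (multipliable_one_sub_mul_pow hp (z * p)).congr fun j => by ring
  have hinv := multipliable_one_sub_pow_succ_div hp z
  have hhead : ∏' j : ℕ, (1 - z * p ^ j) = (1 - z * p ^ 0) * ∏' j : ℕ, (1 - z * p ^ (j + 1)) :=
    tprod_eq_zero_mul' (f := fun j : ℕ => 1 - z * p ^ j) hshift
  have hpair (n : ℕ) : 1 - 2 * p ^ (n + 1) * ((z + z⁻¹) / 2) + p ^ (2 * (n + 1)) =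
      (1 - z * p ^ (n + 1)) * (1 - p ^ (n + 1) / z) := by
    field_simp
    ring
  rw [Theta_eq_tprod_mul_tprod hp, (multipliable_one_sub_mul_pow hp z).tprod_mul hinv, hhead,
    tprod_congr hpair, hshift.tprod_mul hinv, pow_zero, mul_one]
  ring

lemma two_mul_sin_eq_exp_mul_one_sub_exp (w : ℂ) :
    2 * sin w = I * cexp (-(I * w)) * (1 - cexp (2 * I * w)) := by
  have hadd : cexp (2 * I * w) = cexp (I * w) * cexp (I * w) := by rw [← exp_add]; congr 1; ring
  have hcancel : cexp (-(I * w)) * cexp (I * w) = 1 := by rw [← exp_add, neg_add_cancel, exp_zero]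
  rw [sin, hadd, show -w * I = -(I * w) by ring, mul_comm w I]
  linear_combination I * cexp (I * w) * hcancel

lemma th1_eq_jacobiTheta₂ {σ : ℂ} (hσ : 0 < σ.im) (v : ℂ) :
    th1 v σ = I * cexp (π * I * (σ / 4 - v)) * jacobiTheta₂ (v + 1 / 2 - σ / 2) σ := by
  have hcos : cos (2 * π * v) = (cexp (2 * π * I * v) + (cexp (2 * π * I * v))⁻¹) / 2 := by
    rw [cos, ← exp_neg]
    congr 3 <;> ring
  have hprefactor : cexp (π * I * (σ / 4 - v)) =
      cexp (2 * π * I * σ / 8) * cexp (-(I * (π * v))) := by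
    rw [← exp_add]; congr 1; ring
  have hsin := two_mul_sin_eq_exp_mul_one_sub_exp (π * v)
  rw [show 2 * I * (π * v) = 2 * π * I * v by ring] at hsin
  rw [← Theta_exp_eq_jacobiTheta₂ hσ, Theta_eq_one_sub_mul
    (norm_exp_two_pi_I_mul_lt_one_iff.mpr hσ) (exp_ne_zero _), th1, hprefactor, ← hcos,
    mul_right_comm _ _ (sin _), mul_right_comm 2 _ (sin _), hsin]
  ring

lemma th0_eq_jacobiTheta₂ {σ : ℂ} (hσ : 0 < σ.im) (v : ℂ) :
    th0 v σ = jacobiTheta₂ (v + 1 / 2) σ := by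
  have hexp : cexp (π * I * (v + σ / 4)) * cexp (π * I * (σ / 4 - (v + σ / 2))) = 1 := by
    rw [← exp_add, ← exp_zero]; congr 1; ring
  rw [th0, th1_eq_jacobiTheta₂ hσ, show v + σ / 2 + 1 / 2 - σ / 2 = v + 1 / 2 by ring]
  linear_combination (-I * I * jacobiTheta₂ (v + 1 / 2) σ) * hexp
    - jacobiTheta₂ (v + 1 / 2) σ * I_mul_I

lemma th3_eq_jacobiTheta₂ {σ : ℂ} (hσ : 0 < σ.im) (v : ℂ) : th3 v σ = jacobiTheta₂ v σ := by
  have hexp : cexp (π * I * (v + σ / 4)) * cexp (π * I * (σ / 4 - (v + (σ + 1) / 2))) = -I := by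
    rw [← exp_add, ← exp_neg_pi_div_two_mul_I]; congr 1; ring
  rw [th3, th1_eq_jacobiTheta₂ hσ, show v + (σ + 1) / 2 + 1 / 2 - σ / 2 = v + 1 by ring,
    jacobiTheta₂_add_left]
  linear_combination (I * jacobiTheta₂ v σ) * hexp - jacobiTheta₂ v σ * I_mul_I

lemma th1_neg (v σ : ℂ) : th1 (-v) σ = -th1 v σ := by
  simp only [th1, mul_neg, sin_neg, cos_neg, neg_mul]

lemma jacobiTheta₂_term_add_half (n : ℤ) (v σ : ℂ) :
    jacobiTheta₂_term n (v + 1 / 2) σ = (-1) ^ n * jacobiTheta₂_term n v σ := by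
  rw [jacobiTheta₂_term, jacobiTheta₂_term, ← exp_pi_mul_I, ← exp_int_mul, ← exp_add]
  congr 1
  ring

lemma th0_mul_th3_sub_th3_mul_th0 {σ : ℂ} (hσ : 0 < σ.im) (x y : ℂ) :
    th0 x σ * th3 y σ - th3 x σ * th0 y σ = ∑' q : ℤ × ℤ, ((-1) ^ q.1 - (-1) ^ q.2) *
      (jacobiTheta₂_term q.1 x σ * jacobiTheta₂_term q.2 y σ) := by
  have hsum (v : ℂ) := ((summable_jacobiTheta₂_term_iff v σ).mpr hσ).norm
  simp only [th0_eq_jacobiTheta₂ hσ, th3_eq_jacobiTheta₂ hσ, jacobiTheta₂]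
  rw [tsum_mul_tsum_of_summable_norm (hsum _) (hsum _),
    tsum_mul_tsum_of_summable_norm (hsum _) (hsum _),
    ← (summable_mul_of_summable_norm (hsum _) (hsum _)).tsum_sub
      (summable_mul_of_summable_norm (hsum _) (hsum _))]
  refine tsum_congr fun q => ?_
  rw [jacobiTheta₂_term_add_half, jacobiTheta₂_term_add_half]
  ring

lemma th1_add_mul_th1_sub {τ : ℂ} (hτ : 0 < τ.im) (x y : ℂ) :
    th1 (x + y) τ * th1 (x - y) τ = ∑' q : ℤ × ℤ, -(-1) ^ (q.1 + q.2) *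
      (jacobiTheta₂_term (q.1 + q.2 - 1) x (τ / 2) * jacobiTheta₂_term (q.1 - q.2) y (τ / 2)) := by
  have hsum (v : ℂ) := ((summable_jacobiTheta₂_term_iff v τ).mpr hτ).norm
  rw [th1_eq_jacobiTheta₂ hτ, th1_eq_jacobiTheta₂ hτ, mul_mul_mul_comm, jacobiTheta₂, jacobiTheta₂,
    tsum_mul_tsum_of_summable_norm (hsum _) (hsum _), ← tsum_mul_left]
  refine tsum_congr fun ⟨S, D⟩ => ?_
  have hterm : cexp (π * I * (τ / 4 - (x + y))) * cexp (π * I * (τ / 4 - (x - y))) *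
      (jacobiTheta₂_term S (x + y + 1 / 2 - τ / 2) τ *
        jacobiTheta₂_term D (x - y + 1 / 2 - τ / 2) τ) =
      (-1) ^ (S + D) *
        (jacobiTheta₂_term (S + D - 1) x (τ / 2) * jacobiTheta₂_term (S - D) y (τ / 2)) := by
    rw [← exp_pi_mul_I, ← exp_int_mul]
    simp only [jacobiTheta₂_term, ← exp_add]
    congr 1
    push_cast
    ring
  rw [mul_mul_mul_comm I, I_mul_I, neg_one_mul, neg_mul, neg_mul, hterm]

lemma neg_one_zpow_eq_of_even_sub {m n : ℤ} (h : Even (m - n)) : (-1 : ℂ) ^ m = (-1) ^ n := by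
  rw [← sub_add_cancel m n, zpow_add₀ (by norm_num), h.neg_one_zpow, one_mul]

lemma theta_determinant {τ : ℂ} (hτ : 0 < τ.im) (x y : ℂ) :
    th0 x (τ / 2) * th3 y (τ / 2) - th3 x (τ / 2) * th0 y (τ / 2) =
      2 * (th1 (x + y) τ * th1 (x - y) τ) := by
  have hσ : 0 < (τ / 2).im := by
    rw [← ofReal_ofNat, div_ofReal_im]
    exact half_pos hτ
  let rotate (q : ℤ × ℤ) : ℤ × ℤ := (q.1 + q.2 - 1, q.1 - q.2)
  have hrotate : rotate.Injective := fun q q' h => by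
    simp only [rotate, Prod.mk.injEq] at h
    exact Prod.ext (by lia) (by lia)
  rw [th0_mul_th3_sub_th3_mul_th0 hσ, th1_add_mul_th1_sub hτ, ← tsum_mul_left,
    ← hrotate.tsum_eq]
  · refine tsum_congr fun ⟨S, D⟩ => ?_
    have hdiff : (-1 : ℂ) ^ (S - D) = (-1) ^ (S + D) :=
      neg_one_zpow_eq_of_even_sub ⟨-D, by ring⟩
    have hpred : (-1 : ℂ) ^ (S + D - 1) = -(-1) ^ (S + D) := by
      rw [zpow_sub_one₀ (by norm_num), inv_neg_one, mul_neg_one]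
    simp only [rotate, hdiff, hpred]
    ring
  -- The terms with `m ≡ n (mod 2)` cancel; the others are indexed by the range of `rotate`.
  · rintro ⟨m, n⟩ hmn
    rcases Int.even_or_odd (m - n) with heven | ⟨D, hD⟩
    · exact absurd (by simp only [neg_one_zpow_eq_of_even_sub heven, sub_self, zero_mul]) hmn
    · exact ⟨(n + D + 1, D + 1), Prod.ext (by simp only [rotate]; lia) (by simp only [rotate]; lia)⟩

end JacobiTheta

/-! ### Brackets -/

section Brackets

open scoped Real

variable {τ : ℂ} {r : ℝ}

lemma neg_I_mul_cpow_half (hτ : 0 < τ.im) :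
    (-I * τ) ^ (1 / 2 : ℂ) = cexp (-π * I / 4) * τ ^ (1 / 2 : ℂ) := by
  have hτ0 : τ ≠ 0 := by rintro rfl; simp at hτ
  have hlog : log (-I * τ) = log (-I) + log τ := by
    rw [log_mul_eq_add_log_iff (neg_ne_zero.mpr I_ne_zero) hτ0, arg_neg_I]
    have := arg_nonneg_iff.mpr hτ.le
    have := arg_le_pi τ
    constructor <;> linarith [Real.pi_pos]
  rw [cpow_def_of_ne_zero (mul_ne_zero (neg_ne_zero.mpr I_ne_zero) hτ0),
    cpow_def_of_ne_zero hτ0, hlog, log_neg_I, ← exp_add]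
  congr 1
  ring

lemma Cc_eq_exp_mul_cpow (hτ : 0 < τ.im) (hr : 0 < r) :
    Cc τ r = cexp (π * I / (4 * τ)) * (-I * τ) ^ (1 / 2 : ℂ) := by
  have hτ0 : τ ≠ 0 := by rintro rfl; simp at hτ
  have hr0 : (r : ℂ) ≠ 0 := ofReal_ne_zero.mpr hr.ne'
  have hexp : xp τ r (-r / 4) = cexp (π * I / (4 * τ)) := by
    rw [xp]; congr 1; field_simp
  rw [Cc, hexp, neg_I_mul_cpow_half hτ, mul_assoc]

lemma br_eq_Cc_mul_th1 (hτ : 0 < τ.im) (hr : 0 < r) (u : ℂ) :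
    br τ r u = Cc τ r * th1 (u / r) τ := by
  have hτ0 : τ ≠ 0 := by rintro rfl; simp at hτ
  have hr0 : (r : ℂ) ≠ 0 := ofReal_ne_zero.mpr hr.ne'
  have hσ : 0 < (-1 / τ).im := by
    rw [neg_div, neg_im, one_div, inv_im, neg_div, neg_neg]
    exact div_pos hτ (normSq_pos.mpr hτ0)
  have hnome : xp τ r (2 * r) = cexp (2 * π * I * (-1 / τ)) := by
    rw [xp]; congr 1; field_simp
  have harg : xp τ r (2 * u) = cexp (2 * π * I * (-u / (r * τ))) := by
    rw [xp]; congr 1; field_simp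
  have hmodular := jacobiTheta₂_functional_equation (-u / r + 1 / 2 - τ / 2) τ
  have hperiod := jacobiTheta₂_add_left ((-u / r + 1 / 2 - τ / 2) / τ) (-1 / τ)
  have hexp : xp τ r (u ^ 2 / r - u) = -I * (cexp (π * I / (4 * τ)) *
      cexp (π * I * (τ / 4 - -u / r)) * cexp (-π * I * (-u / r + 1 / 2 - τ / 2) ^ 2 / τ)) := by
    rw [← exp_neg_pi_div_two_mul_I, ← exp_add, ← exp_add, ← exp_add, xp]
    congr 1
    field_simp
    ring
  have : (-I * τ) ^ (1 / 2 : ℂ) ≠ 0 := by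
    rw [Ne, cpow_eq_zero_iff]; simp [hτ0]
  rw [br, hnome, harg, Theta_exp_eq_jacobiTheta₂ hσ, Cc_eq_exp_mul_cpow hτ hr, ← neg_neg (u / r),
    th1_neg, ← neg_div, th1_eq_jacobiTheta₂ hτ, hmodular, ← hperiod, hexp,
    show -u / (r * τ) + 1 / 2 - -1 / τ / 2 = (-u / r + 1 / 2 - τ / 2) / τ + 1 by field_simp; ring]
  field_simp

lemma br_neg (hτ : 0 < τ.im) (hr : 0 < r) (u : ℂ) : br τ r (-u) = -br τ r u := by
  rw [br_eq_Cc_mul_th1 hτ hr, br_eq_Cc_mul_th1 hτ hr, neg_div, th1_neg, mul_neg]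

/-- The two theta functions on the half-period lattice which are the components of the
intertwining vectors: `ϑ₀` for the sign `+1`, encoded as `true`, and `ϑ₃` for the sign `-1`,
with the argument scaled by `1 / (2r)`. -/
def thetaComp (τ : ℂ) (r : ℝ) (e : Bool) (X : ℂ) : ℂ :=
  if e then th0 (X / (2 * r)) (τ / 2) else th3 (X / (2 * r)) (τ / 2)

lemma thetaComp_determinant (hτ : 0 < τ.im) (hr : 0 < r) (X Y : ℂ) :
    Cc τ r ^ 2 * (thetaComp τ r true X * thetaComp τ r false Y
      - thetaComp τ r false X * thetaComp τ r true Y) =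
      2 * (br τ r ((X + Y) / 2) * br τ r ((X - Y) / 2)) := by
  have hdet := theta_determinant hτ (X / (2 * r)) (Y / (2 * r))
  rw [← add_div, ← sub_div] at hdet
  simp only [thetaComp, if_true, Bool.false_eq_true, if_false]
  rw [hdet, br_eq_Cc_mul_th1 hτ hr, br_eq_Cc_mul_th1 hτ hr, div_div, div_div]
  ring

/-- This is the Plücker relation between the `2 × 2` minors of the matrix whose columns are the
pairs of theta components at `2x`, `2y`, `2z`, `2w`. -/
theorem br_three_term (hτ : 0 < τ.im) (hr : 0 < r) (x y z w : ℂ) :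
    br τ r (x + y) * br τ r (x - y) * (br τ r (z + w) * br τ r (z - w))
      - br τ r (x + z) * br τ r (x - z) * (br τ r (y + w) * br τ r (y - w))
      + br τ r (x + w) * br τ r (x - w) * (br τ r (y + z) * br τ r (y - z)) = 0 := by
  have hminor (x y : ℂ) : br τ r (x + y) * br τ r (x - y) = Cc τ r ^ 2 / 2 *
      (thetaComp τ r true (2 * x) * thetaComp τ r false (2 * y)
        - thetaComp τ r false (2 * x) * thetaComp τ r true (2 * y)) := by
    have hdet := thetaComp_determinant hτ hr (2 * x) (2 * y)
    rw [← mul_add, ← mul_sub, mul_div_cancel_left₀ _ two_ne_zero,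
      mul_div_cancel_left₀ _ two_ne_zero] at hdet
    linear_combination -(1 / 2) * hdet
  simp only [hminor]
  ring

end Brackets

/-! ### The Pascal rule for elliptic binomial coefficients -/

section Pascal

variable {τ : ℂ} {r : ℝ}

lemma brF_zero (τ : ℂ) (r : ℝ) (x : ℂ) : brF τ r x 0 = 1 := prod_range_zero _

lemma brF_succ (τ : ℂ) (r : ℝ) (x : ℂ) (n : ℕ) :
    brF τ r x (n + 1) = brF τ r x n * br τ r (x + n) :=
  prod_range_succ _ _

lemma brF_succ' (τ : ℂ) (r : ℝ) (x : ℂ) (n : ℕ) :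
    brF τ r x (n + 1) = br τ r x * brF τ r (x + 1) n := by
  rw [brF, prod_range_succ', mul_comm, Nat.cast_zero, add_zero, brF]
  congr 1
  refine prod_congr rfl fun j _ => ?_
  push_cast
  ring_nf

lemma Cnk_of_add_eq (τ : ℂ) (r : ℝ) {k n m : ℕ} (hk : n + m = k) (α β γ : ℂ) :
    Cnk τ r k n α β γ = brF τ r 1 k / (brF τ r 1 n * brF τ r 1 m) *
      (brF τ r (α - γ) n * brF τ r (α + γ + m) n * brF τ r (α - β) m * brF τ r (α + β + n) m) /
      (brF τ r (β - γ - m) n * brF τ r (γ - β - n) m * brF τ r (β + γ) k) := by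
  subst hk
  rw [Cnk, Nat.add_sub_cancel_left, Nat.cast_add]
  ring_nf

lemma CdenomNZ_iff_of_add_eq {k n m : ℕ} (hk : n + m = k) (β γ : ℂ) :
    CdenomNZ τ r k n β γ ↔ brF τ r 1 n ≠ 0 ∧ brF τ r 1 m ≠ 0 ∧ brF τ r (β - γ - m) n ≠ 0 ∧
      brF τ r (γ - β - n) m ≠ 0 ∧ brF τ r (β + γ) k ≠ 0 := by
  subst hk
  rw [CdenomNZ, Nat.add_sub_cancel_left, Nat.cast_add,
    show β - γ + (n : ℂ) - (n + m) = β - γ - m by ring]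

lemma Cnk_symm (τ : ℂ) (r : ℝ) {k n m : ℕ} (hk : n + m = k) (α β γ : ℂ) :
    Cnk τ r k n α β γ = Cnk τ r k m α γ β := by
  rw [Cnk_of_add_eq τ r hk, Cnk_of_add_eq τ r ((add_comm m n).trans hk), add_comm γ β]
  ring

lemma CdenomNZ_symm {k n m : ℕ} (hk : n + m = k) {β γ : ℂ} (h : CdenomNZ τ r k n β γ) :
    CdenomNZ τ r k m γ β := by
  rw [CdenomNZ_iff_of_add_eq hk] at h
  rw [CdenomNZ_iff_of_add_eq ((add_comm m n).trans hk), add_comm γ β]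
  tauto

lemma br_pascal (hτ : 0 < τ.im) (hr : 0 < r) (α β γ N M : ℂ) :
    br τ r (N + M) * br τ r (α + γ + M) * br τ r (α + β + N) * br τ r (β - γ) =
      br τ r N * br τ r (β - γ - M) * br τ r (α + γ) * br τ r (α + β + (N + M))
        - br τ r M * br τ r (γ - β - N) * br τ r (α + β) * br τ r (α + γ + (N + M)) := by
  have hweier : br τ r (α + γ + M) * br τ r (α + β + N) * (br τ r (N + M) * br τ r (β - γ))
      - br τ r (α + β + (N + M)) * br τ r (α + γ) * (br τ r (-(β - γ - M)) * br τ r (-N))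
      + br τ r (α + γ + (N + M)) * br τ r (α + β) * (br τ r M * br τ r (γ - β - N)) = 0 := by
    convert br_three_term hτ hr (α + (β + γ + N + M) / 2) ((γ - β + M - N) / 2)
      ((N + M + β - γ) / 2) ((N + M + γ - β) / 2) using 5 <;> ring_nf
  rw [br_neg hτ hr, br_neg hτ hr] at hweier
  linear_combination hweier

lemma exists_common_factor_Cnk (τ : ℂ) (r : ℝ) (n m : ℕ) (α β γ : ℂ) : ∃ P,
    Cnk τ r (n + m + 2) (n + 1) α β γ =
        P * (br τ r (1 + n + (1 + m)) * br τ r (α + γ + (1 + m)) * br τ r (α + β + (1 + n)) /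
          (br τ r (1 + n) * br τ r (1 + m) * br τ r (β - γ - (1 + m)) * br τ r (γ - β - (1 + n)) *
            br τ r (β + γ))) ∧
      br τ r (α - γ) * Cnk τ r (n + m + 1) n (α + 1) (β + 1) γ =
        P * (br τ r (α + β + (1 + n + (1 + m))) / (br τ r (1 + m) * br τ r (γ - β - (1 + n)))) ∧
      br τ r (α - β) * Cnk τ r (n + m + 1) (n + 1) (α + 1) β (γ + 1) =
        P * (br τ r (α + γ + (1 + n + (1 + m))) / (br τ r (1 + n) * br τ r (β - γ - (1 + m)))) := by
  refine ⟨brF τ r 1 (n + m + 1) / (brF τ r 1 n * brF τ r 1 m) *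
    (brF τ r (α - γ) (n + 1) * brF τ r (α + γ + (m + 2)) n * brF τ r (α - β) (m + 1) *
      brF τ r (α + β + (n + 2)) m) /
    (brF τ r (β - γ - m) n * brF τ r (γ - β - n) m * brF τ r (β + γ + 1) (n + m + 1)), ?_, ?_, ?_⟩
  · rw [Cnk_of_add_eq τ r (n := n + 1) (m := m + 1) (by ring), brF_succ τ r 1 (n + m + 1),
      brF_succ τ r 1 n, brF_succ τ r 1 m, brF_succ' τ r (α + γ + _) n, brF_succ' τ r (α + β + _) m,
      brF_succ' τ r (β - γ - _) n, brF_succ' τ r (γ - β - _) m, brF_succ' τ r (β + γ) (n + m + 1)]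
    push_cast
    ring_nf
  · rw [Cnk_of_add_eq τ r (n := n) (m := m + 1) (by ring), brF_succ τ r 1 m,
      brF_succ τ r (α + 1 + (β + 1) + n) m, brF_succ' τ r (α - γ) n,
      brF_succ' τ r (γ - (β + 1) - n) m]
    push_cast
    ring_nf
  · rw [Cnk_of_add_eq τ r (n := n + 1) (m := m) (by ring), brF_succ τ r 1 n,
      brF_succ τ r (α + 1 + (γ + 1) + m) n, brF_succ' τ r (α - β) m,
      brF_succ' τ r (β - (γ + 1) - m) n]
    push_cast
    ring_nf

/-- The coefficient of the Pascal rule for the elliptic binomial coefficients. -/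
def pascalWeight (τ : ℂ) (r : ℝ) (α β γ : ℂ) : ℂ :=
  br τ r (α - γ) * br τ r (α + γ) / (br τ r (β - γ) * br τ r (β + γ))

theorem Cnk_pascal (hτ : 0 < τ.im) (hr : 0 < r) (n m : ℕ) (α β γ : ℂ)
    (hC : CdenomNZ τ r (n + m + 2) (n + 1) β γ) (hβγ : br τ r (β - γ) ≠ 0) :
    Cnk τ r (n + m + 2) (n + 1) α β γ =
      pascalWeight τ r α β γ * Cnk τ r (n + m + 1) n (α + 1) (β + 1) γ
        + pascalWeight τ r α γ β * Cnk τ r (n + m + 1) (n + 1) (α + 1) β (γ + 1) := by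
  rw [CdenomNZ_iff_of_add_eq (m := m + 1) (by ring), brF_succ, brF_succ τ r 1 m, brF_succ',
    brF_succ' τ r _ m, brF_succ', Nat.cast_succ, Nat.cast_succ, add_comm (m : ℂ) 1,
    add_comm (n : ℂ) 1] at hC
  obtain ⟨hn, hm, hβ, hγ, hk⟩ := hC
  replace hn := right_ne_zero_of_mul hn
  replace hm := right_ne_zero_of_mul hm
  replace hβ := left_ne_zero_of_mul hβ
  replace hγ := left_ne_zero_of_mul hγ
  replace hk := left_ne_zero_of_mul hk
  obtain ⟨P, hwhole, hup, hdown⟩ := exists_common_factor_Cnk τ r n m α β γ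
  have hneg : br τ r (γ - β) = -br τ r (β - γ) := by rw [← neg_sub, br_neg hτ hr]
  calc Cnk τ r (n + m + 2) (n + 1) α β γ
      = br τ r (α + γ) / (br τ r (β - γ) * br τ r (β + γ)) *
            (br τ r (α - γ) * Cnk τ r (n + m + 1) n (α + 1) (β + 1) γ)
          + br τ r (α + β) / (br τ r (γ - β) * br τ r (γ + β)) *
            (br τ r (α - β) * Cnk τ r (n + m + 1) (n + 1) (α + 1) β (γ + 1)) := by
        rw [hwhole, hup, hdown, hneg, add_comm γ β]
        field_simp
        linear_combination P * br_pascal hτ hr α β γ (1 + n) (1 + m)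
    _ = _ := by rw [pascalWeight, pascalWeight]; ring

lemma Cnk_zero (τ : ℂ) (r : ℝ) {k : ℕ} (hk : brF τ r 1 k ≠ 0) (α β γ : ℂ) :
    Cnk τ r k 0 α β γ = brF τ r (α - β) k * brF τ r (α + β) k /
      (brF τ r (γ - β) k * brF τ r (γ + β) k) := by
  simp [Cnk_of_add_eq τ r (Nat.zero_add k), brF_zero, hk, add_comm]

lemma Cnk_succ_zero (τ : ℂ) (r : ℝ) {k : ℕ} (hk : brF τ r 1 (k + 1) ≠ 0) (α β γ : ℂ) :
    Cnk τ r (k + 1) 0 α β γ =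
      pascalWeight τ r α γ β * Cnk τ r k 0 (α + 1) β (γ + 1) := by
  have hk' : brF τ r 1 k ≠ 0 := left_ne_zero_of_mul (brF_succ τ r 1 k ▸ hk)
  rw [Cnk_zero τ r hk, Cnk_zero τ r hk', pascalWeight]
  simp only [brF_succ', sub_add_eq_add_sub, add_right_comm]
  ring

lemma Cnk_succ_self (τ : ℂ) (r : ℝ) {k : ℕ} (hk : brF τ r 1 (k + 1) ≠ 0) (α β γ : ℂ) :
    Cnk τ r (k + 1) (k + 1) α β γ =
      pascalWeight τ r α β γ * Cnk τ r k k (α + 1) (β + 1) γ := by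
  rw [Cnk_symm τ r (add_zero _), Cnk_succ_zero τ r hk, Cnk_symm τ r (zero_add _)]

lemma CdenomNZ_pred_left {k n : ℕ} (hn : n ≤ k) {β γ : ℂ}
    (h : CdenomNZ τ r (k + 1) (n + 1) β γ) : CdenomNZ τ r k n (β + 1) γ := by
  obtain ⟨m, rfl⟩ := Nat.exists_eq_add_of_le hn
  rw [CdenomNZ_iff_of_add_eq (m := m) (by ring), brF_succ, brF_succ' τ r (β - γ - m),
    brF_succ' τ r (β + γ), Nat.cast_succ, show γ - β - (n + 1) = γ - (β + 1) - n by ring,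
    show β - γ - m + 1 = β + 1 - γ - m by ring, add_right_comm β γ] at h
  obtain ⟨h1n, h1m, hβ, hγ, hk⟩ := h
  exact (CdenomNZ_iff_of_add_eq rfl _ _).2 ⟨left_ne_zero_of_mul h1n, h1m,
    right_ne_zero_of_mul hβ, hγ, right_ne_zero_of_mul hk⟩

lemma CdenomNZ_pred_right {k n : ℕ} (hn : n ≤ k) {β γ : ℂ}
    (h : CdenomNZ τ r (k + 1) n β γ) : CdenomNZ τ r k n β (γ + 1) := by
  obtain ⟨m, rfl⟩ := Nat.exists_eq_add_of_le' hn
  exact CdenomNZ_symm rfl (CdenomNZ_pred_left le_self_add (CdenomNZ_symm (by ring) h))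

end Pascal

/-! ### Path sums of one-step contractions -/

section PathSum

variable {τ : ℂ} {r : ℝ}

lemma sg_true : sg true = 1 := rfl

lemma sg_false : sg false = -1 := rfl

lemma psi_sg (τ : ℂ) (r : ℝ) (u : ℂ) (e : Bool) (a b : ℤ) :
    psi τ r u (sg e) a b = thetaComp τ r e ((a - b) * u + a) := by
  cases e <;> simp [psi, sg, thetaComp]

lemma psiStar_sg (τ : ℂ) (r : ℝ) (u : ℂ) (e s : Bool) (b : ℤ) :
    psiStar τ r u (sg e) (b + sg s) b =
      -(sg e : ℂ) * sg s * Cc τ r ^ 2 * thetaComp τ r (!e) (sg s * u + b) /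
        (2 * br τ r b * br τ r u) := by
  have hneg : -sg e = sg (!e) := by cases e <;> rfl
  rw [psiStar, hneg, psi_sg]
  push_cast
  ring_nf

/-- The contraction `∑_ε ψ*_ε(u)^{b+s}_b ψ_ε(u)^a_{a+1}` of a step `b → b + s` of the lower path
with a step `a → a + 1` of the upper one, the sign `s` being encoded as a boolean. -/
def stepWeight (τ : ℂ) (r : ℝ) (u : ℂ) (a b : ℤ) (s : Bool) : ℂ :=
  ∑ e : Bool, psiStar τ r u (sg e) (b + sg s) b * psi τ r u (sg e) a (a + 1)

lemma stepWeight_eq_mul_br (hτ : 0 < τ.im) (hr : 0 < r) (u : ℂ) (a b : ℤ) (s : Bool) :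
    stepWeight τ r u a b s = sg s * (br τ r ((sg s * u + b + (-u + a)) / 2) *
      br τ r ((sg s * u + b - (-u + a)) / 2)) / (br τ r b * br τ r u) := by
  have hdet := thetaComp_determinant hτ hr (sg s * u + b) (-u + a)
  have ha : ((a : ℂ) - (a + 1 : ℤ)) * u + a = -u + a := by push_cast; ring
  rw [stepWeight, Fintype.sum_bool, psiStar_sg, psiStar_sg, psi_sg, psi_sg, ha]
  simp only [sg_true, sg_false, Bool.not_true, Bool.not_false, Int.cast_one, Int.cast_neg]
  linear_combination (sg s : ℂ) / (2 * br τ r b * br τ r u) * hdet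

/-- The common form `(-u + x - k + 1) / 2` of the parameters `α`, `β`, `γ` of `C_n^k`, which are its
values at `x = a`, `b`, `-b`. -/
def specParam (k : ℕ) (u x : ℂ) : ℂ := (-u + x - k + 1) / 2

lemma specParam_add_one (k : ℕ) (u x : ℂ) :
    specParam k u (x + 1) = specParam (k + 1) u x + 1 := by
  rw [specParam, specParam]; push_cast; ring

lemma specParam_sub_one (k : ℕ) (u x : ℂ) : specParam k u (x - 1) = specParam (k + 1) u x := by
  rw [specParam, specParam]; push_cast; ring

lemma specParam_sub (k : ℕ) (u x y : ℂ) :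
    specParam k u x - specParam k u y = (x - y) / 2 := by
  rw [specParam, specParam]; ring

lemma specParam_succ_add (k : ℕ) (u x y : ℂ) :
    specParam (k + 1) u x + specParam (k + 1) u y = (x + y) / 2 - (u + k) := by
  rw [specParam, specParam]; push_cast; ring

lemma stepWeight_eq_pascalWeight (hτ : 0 < τ.im) (hr : 0 < r) (k : ℕ) (u : ℂ) (a b : ℤ)
    (s : Bool) :
    stepWeight τ r (u + k) a b s = pascalWeight τ r (specParam (k + 1) u a)
      (specParam (k + 1) u (sg s * b)) (specParam (k + 1) u (-(sg s * b))) := by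
  rw [stepWeight_eq_mul_br hτ hr, pascalWeight]
  simp only [specParam_sub, specParam_succ_add, sub_neg_eq_add, ← sub_eq_add_neg, add_self_div_two,
    sub_self, zero_div, zero_sub]
  generalize u + (k : ℂ) = v
  cases s <;> simp only [sg_true, sg_false, Int.cast_one, Int.cast_neg, neg_one_mul, one_mul]
  · have hab : (-v + b - (-v + a)) / 2 = -((a + -b) / 2 : ℂ) := by ring
    rw [hab, br_neg hτ hr, br_neg hτ hr, br_neg hτ hr]
    ring_nf
  · have hab : (v + b - (-v + a)) / 2 = -((a - b) / 2 - v : ℂ) := by ring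
    rw [hab, br_neg hτ hr, br_neg hτ hr]
    ring_nf

/-- The sum, over all nearest-neighbour paths of length `k` from `b` to `c`, of the products of the
step weights along the straight path `a, a + 1, …, a + k`; the spectral parameter decreases from
`u + k - 1` to `u`. -/
def pathSum (τ : ℂ) (r : ℝ) (u : ℂ) : ℕ → ℤ → ℤ → ℤ → ℂ
  | 0, _, b, c => if b = c then 1 else 0
  | k + 1, a, b, c =>
    ∑ s : Bool, stepWeight τ r (u + k) a b s * pathSum τ r u k (a + 1) (b + sg s) c

lemma pathSum_succ (hτ : 0 < τ.im) (hr : 0 < r) (u : ℂ) (k : ℕ) (a b c : ℤ) :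
    pathSum τ r u (k + 1) a b c =
      pascalWeight τ r (specParam (k + 1) u a) (specParam (k + 1) u b) (specParam (k + 1) u (-b)) *
          pathSum τ r u k (a + 1) (b + 1) c
        + pascalWeight τ r (specParam (k + 1) u a) (specParam (k + 1) u (-b))
            (specParam (k + 1) u b) * pathSum τ r u k (a + 1) (b - 1) c := by
  simp [pathSum, stepWeight_eq_pascalWeight hτ hr, sg, sub_eq_add_neg]

lemma pathSum_eq_zero (τ : ℂ) (r : ℝ) (u : ℂ) {k : ℕ} (a : ℤ) {b c : ℤ} (h : (k : ℤ) < |c - b|) :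
    pathSum τ r u k a b c = 0 := by
  induction k generalizing a b with
  | zero =>
    have hbc : b ≠ c := by rintro rfl; simp at h
    exact if_neg hbc
  | succ k ih =>
    refine sum_eq_zero fun s _ => ?_
    rw [ih, mul_zero]
    cases s <;> simp only [sg] <;> grind

lemma pathSum_sub_eq_Cnk_zero (hτ : 0 < τ.im) (hr : 0 < r) (u : ℂ) {k : ℕ} (a b : ℤ)
    (hk : brF τ r 1 k ≠ 0) :
    pathSum τ r u k a b (b - k) =
      Cnk τ r k 0 (specParam k u a) (specParam k u b) (specParam k u (-b)) := by
  induction k generalizing a b with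
  | zero => simp [pathSum, Cnk, brF_zero]
  | succ k ih =>
    have hup : pathSum τ r u k (a + 1) (b + 1) (b - (k + 1 : ℕ)) = 0 :=
      pathSum_eq_zero τ r u _ (by rw [lt_abs]; omega)
    have hdown := ih (a + 1) (b - 1) (left_ne_zero_of_mul (brF_succ τ r 1 k ▸ hk))
    push_cast [neg_sub', sub_neg_eq_add, specParam_add_one, specParam_sub_one] at hdown
    rw [pathSum_succ hτ hr, hup, Cnk_succ_zero τ r hk, ← hdown, mul_zero, zero_add, sub_sub,
      Nat.cast_succ, add_comm 1]

lemma pathSum_add_eq_Cnk_self (hτ : 0 < τ.im) (hr : 0 < r) (u : ℂ) {k : ℕ} (a b : ℤ)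
    (hk : brF τ r 1 k ≠ 0) :
    pathSum τ r u k a b (b + k) =
      Cnk τ r k k (specParam k u a) (specParam k u b) (specParam k u (-b)) := by
  induction k generalizing a b with
  | zero => simp [pathSum, Cnk, brF_zero]
  | succ k ih =>
    have hdown : pathSum τ r u k (a + 1) (b - 1) (b + (k + 1 : ℕ)) = 0 :=
      pathSum_eq_zero τ r u _ (by rw [lt_abs]; omega)
    have hup := ih (a + 1) (b + 1) (left_ne_zero_of_mul (brF_succ τ r 1 k ▸ hk))
    push_cast [neg_add, ← sub_eq_add_neg, specParam_add_one, specParam_sub_one] at hup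
    rw [pathSum_succ hτ hr, hdown, Cnk_succ_self τ r hk, ← hup, mul_zero, add_zero, add_assoc,
      Nat.cast_succ, add_comm 1]

theorem pathSum_eq_Cnk (hτ : 0 < τ.im) (hr : 0 < r) (u : ℂ) {k n m : ℕ} (hk : n + m = k) (a b : ℤ)
    (hb : ∀ s : ℤ, |s - b| ≤ k → br τ r s ≠ 0)
    (hC : CdenomNZ τ r k n (specParam k u b) (specParam k u (-b))) :
    pathSum τ r u k a b (b + n - m) =
      Cnk τ r k n (specParam k u a) (specParam k u b) (specParam k u (-b)) := by
  induction k generalizing n m a b with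
  | zero =>
    obtain ⟨rfl, rfl⟩ : n = 0 ∧ m = 0 := by omega
    simp [pathSum, Cnk, brF_zero]
  | succ k ih =>
    rcases n with _ | n
    · obtain rfl : m = k + 1 := by omega
      simpa using pathSum_sub_eq_Cnk_zero hτ hr u a b hC.2.1
    rcases m with _ | m
    · obtain rfl : n = k := by omega
      simpa using pathSum_add_eq_Cnk_self hτ hr u a b hC.1
    obtain rfl : k = n + m + 1 := by omega
    have hup := ih (n := n) (m := m + 1) (by ring) (a + 1) (b + 1)
      fun s hs => hb s (by rw [abs_le] at hs ⊢; omega)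
    have hdown := ih (n := n + 1) (m := m) (by ring) (a + 1) (b - 1)
      fun s hs => hb s (by rw [abs_le] at hs ⊢; omega)
    push_cast [neg_add, ← sub_eq_add_neg, specParam_add_one, specParam_sub_one] at hup
    push_cast [neg_sub', sub_neg_eq_add, specParam_add_one, specParam_sub_one] at hdown
    have hβγ : br τ r (specParam (n + m + 1 + 1) u b - specParam (n + m + 1 + 1) u (-b)) ≠ 0 := by
      rw [specParam_sub, sub_neg_eq_add, add_self_div_two]
      exact hb b (by rw [sub_self, abs_zero]; positivity)
    rw [pathSum_succ hτ hr, Cnk_pascal hτ hr n m _ _ _ hC hβγ,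
      ← hup (CdenomNZ_pred_left (by omega) hC), ← hdown (CdenomNZ_pred_right (by omega) hC)]
    push_cast
    ring_nf

end PathSum

/-! ### Fused intertwining vectors -/

section Fusion

variable {τ : ℂ} {r : ℝ}

/-- The sum over nearest-neighbour paths from `b` to `c` of the products of dual intertwining
vectors whose signs are prescribed by a list; the spectral parameter decreases by one at each step
and ends at `u`. -/
def dualPathSum (τ : ℂ) (r : ℝ) (u : ℂ) : List Bool → ℤ → ℤ → ℂ
  | [], b, c => if b = c then 1 else 0
  | e :: l, b, c =>
    ∑ s : Bool, psiStar τ r (u + l.length) (sg e) (b + sg s) b * dualPathSum τ r u l (b + sg s) c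

lemma psiStar_mul_psiStar_straight (τ : ℂ) (r : ℝ) (v : ℂ) (e e' s : Bool) (b : ℤ) :
    psiStar τ r (v + 1) (sg e) (b + sg s) b * psiStar τ r v (sg e') (b + sg s + sg s) (b + sg s) =
      psiStar τ r (v + 1) (sg e') (b + sg s) b *
        psiStar τ r v (sg e) (b + sg s + sg s) (b + sg s) := by
  have hv : sg s * v + (b + sg s : ℤ) = sg s * (v + 1) + b := by push_cast; ring
  simp only [psiStar_sg, hv]
  ring

lemma psiStar_sg_return (τ : ℂ) (r : ℝ) (v : ℂ) (e s : Bool) (b : ℤ) :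
    psiStar τ r v (sg e) b (b + sg s) =
      (sg e : ℂ) * sg s * Cc τ r ^ 2 * thetaComp τ r (!e) (-(sg s * v) + (b + sg s)) /
        (2 * br τ r (b + sg s : ℤ) * br τ r v) := by
  have hnot : sg (!s) = -sg s := by cases s <;> rfl
  have h := psiStar_sg τ r v e (!s) (b + sg s)
  push_cast [hnot, add_neg_cancel_right] at h ⊢
  rw [h]
  ring_nf

lemma psiStar_mul_psiStar_return_sub (hτ : 0 < τ.im) (hr : 0 < r) (v : ℂ) (b : ℤ) (s : Bool)
    (hb : br τ r (b + sg s : ℤ) ≠ 0) :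
    psiStar τ r (v + 1) (sg true) (b + sg s) b * psiStar τ r v (sg false) b (b + sg s)
        - psiStar τ r (v + 1) (sg false) (b + sg s) b * psiStar τ r v (sg true) b (b + sg s) =
      -(sg s : ℂ) * (Cc τ r ^ 2 * br τ r v / (2 * br τ r b * br τ r (v + 1) * br τ r v)) := by
  have hsq : (sg s : ℂ) * sg s = 1 := by cases s <;> simp [sg]
  have hv : br τ r (sg s * v) = sg s * br τ r v := by
    cases s <;> simp [sg, br_neg hτ hr]
  have hdet := thetaComp_determinant hτ hr (sg s * (v + 1) + b) (-(sg s * v) + (b + sg s))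
  rw [show (sg s * (v + 1) + b + (-(sg s * v) + (b + sg s))) / 2 = ((b + sg s : ℤ) : ℂ) by
      push_cast; ring,
    show (sg s * (v + 1) + b - (-(sg s * v) + (b + sg s))) / 2 = sg s * v by ring, hv] at hdet
  simp only [psiStar_sg, psiStar_sg_return]
  simp only [sg_true, sg_false, Bool.not_true, Bool.not_false, Int.cast_one, Int.cast_neg]
  field_simp
  linear_combination -(sg s : ℂ) * Cc τ r ^ 2 / (br τ r b * br τ r (v + 1) * br τ r v) *
    (sg s * hdet + 2 * br τ r (b + sg s : ℤ) * br τ r v * hsq)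

lemma dualPathSum_swap (hτ : 0 < τ.im) (hr : 0 < r) (u : ℂ) (l : List Bool) (b c : ℤ)
    (hup : br τ r (b + 1 : ℤ) ≠ 0) (hdown : br τ r (b - 1 : ℤ) ≠ 0) :
    dualPathSum τ r u (true :: false :: l) b c = dualPathSum τ r u (false :: true :: l) b c := by
  have hstraight (s : Bool) := psiStar_mul_psiStar_straight τ r (u + l.length) true false s b
  have hret_up := psiStar_mul_psiStar_return_sub hτ hr (u + l.length) b true hup
  have hret_down := psiStar_mul_psiStar_return_sub hτ hr (u + l.length) b false hdown
  have hsg : (sg true : ℂ) + sg false = 0 := by simp [sg]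
  have hup_down : b + sg true + sg false = b := by simp [sg]
  have hdown_up : b + sg false + sg true = b := by simp [sg]
  simp only [dualPathSum, Fintype.sum_bool, List.length_cons, Nat.cast_succ, ← add_assoc, hup_down,
    hdown_up]
  linear_combination dualPathSum τ r u l (b + sg true + sg true) c * hstraight true
    + dualPathSum τ r u l (b + sg false + sg false) c * hstraight false
    + dualPathSum τ r u l b c * (hret_up + hret_down - Cc τ r ^ 2 * br τ r (u + l.length) /
      (2 * br τ r b * br τ r (u + l.length + 1) * br τ r (u + l.length)) * hsg)

theorem dualPathSum_perm (hτ : 0 < τ.im) (hr : 0 < r) (u : ℂ) {l₁ l₂ : List Bool}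
    (hl : l₁.Perm l₂) (b c : ℤ) (hb : ∀ s : ℤ, |s - b| ≤ l₁.length → br τ r s ≠ 0) :
    dualPathSum τ r u l₁ b c = dualPathSum τ r u l₂ b c := by
  induction hl generalizing b with
  | nil => rfl
  | cons e hl ih =>
    rw [dualPathSum, dualPathSum, hl.length_eq]
    refine sum_congr rfl fun s _ => ?_
    rw [ih _ fun t ht => hb t ?_]
    rw [List.length_cons, abs_le] at *
    cases s <;> simp only [sg_true, sg_false] at ht <;> omega
  | swap e e' l =>
    have hup := hb (b + 1) (by simp; omega)
    have hdown := hb (b - 1) (by simp; omega)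
    cases e <;> cases e'
    · rfl
    · exact dualPathSum_swap hτ hr u l b c hup hdown
    · exact (dualPathSum_swap hτ hr u l b c hup hdown).symm
    · rfl
  | trans h₁ _ ih₁ ih₂ => rw [ih₁ b hb, ih₂ b (h₁.length_eq ▸ hb)]

lemma spath_zero (k : ℕ) (a : ℤ) (δ : Fin k → Bool) : spath k a δ 0 = a := by simp [spath]

lemma spath_cons_succ (k : ℕ) (a : ℤ) (s : Bool) (δ : Fin k → Bool) (j : ℕ) :
    spath (k + 1) a (Fin.cons s δ) (j + 1) = spath k (a + sg s) δ j := by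
  rw [spath, spath, sum_range_succ', dif_pos k.succ_pos, add_comm (Finset.sum _ _),
    ← add_assoc]
  congr 1
  refine sum_congr rfl fun i _ => ?_
  simp only [Order.lt_add_one_iff, Order.add_one_le_iff]
  rfl

lemma sum_fin_succ_pi {α M : Type*} [Fintype α] [AddCommMonoid M] (k : ℕ)
    (f : (Fin (k + 1) → α) → M) : ∑ x, f x = ∑ x : α, ∑ y : Fin k → α, f (Fin.cons x y) := by
  rw [← (Fin.consEquiv fun _ : Fin (k + 1) => α).sum_comp, Fintype.sum_prod_type]
  rfl

/-- The product of the dual intertwining vectors with signs `e` along the path with steps `δ`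
starting at `b`, i.e. a summand of `ψ*^{(k)}`. -/
def psiStarProd (τ : ℂ) (r : ℝ) (u : ℂ) {k : ℕ} (e δ : Fin k → Bool) (b : ℤ) : ℂ :=
  ∏ j : Fin k, psiStar τ r (u + k - ((j + 1 : ℕ) : ℂ)) (sg (e j)) (spath k b δ (j + 1))
    (spath k b δ j)

lemma psiStarProd_cons (τ : ℂ) (r : ℝ) (u : ℂ) {k : ℕ} (e : Fin (k + 1) → Bool) (s : Bool)
    (δ : Fin k → Bool) (b : ℤ) :
    psiStarProd τ r u e (Fin.cons s δ) b =
      psiStar τ r (u + k) (sg (e 0)) (b + sg s) b *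
        psiStarProd τ r u (fun j => e j.succ) δ (b + sg s) := by
  rw [psiStarProd, Fin.prod_univ_succ, psiStarProd]
  simp only [Fin.val_zero, Fin.val_succ, spath_cons_succ, spath_zero]
  push_cast
  ring_nf

lemma sum_psiStarProd (τ : ℂ) (r : ℝ) (u : ℂ) {k : ℕ} (e : Fin k → Bool) (b c : ℤ) :
    ∑ δ with ∑ j, sg (δ j) = c - b, psiStarProd τ r u e δ b =
      dualPathSum τ r u (List.ofFn e) b c := by
  induction k generalizing b with
  | zero =>
    rw [sum_filter]
    simp [dualPathSum, psiStarProd, eq_comm, sub_eq_zero]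
  | succ k ih =>
    have hstep (s : Bool) (t : ℤ) : sg s + t = c - b ↔ t = c - (b + sg s) := by omega
    simp only [sum_filter, sum_fin_succ_pi, List.ofFn_succ, dualPathSum, ← ih, mul_sum,
      psiStarProd_cons, Fin.sum_univ_succ, Fin.cons_zero, Fin.cons_succ, hstep, List.length_ofFn,
      mul_ite, mul_zero]

/-- The product of the intertwining vectors with signs `ε` along the path `a, a + 1, …, a + k`, i.e.
a summand of `ψ^{(k)}(u)^a_{a+k}`. -/
def psiProd (τ : ℂ) (r : ℝ) (u : ℂ) {k : ℕ} (ε : Fin k → Bool) (a : ℤ) : ℂ :=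
  ∏ j : Fin k, psi τ r (u + k - ((j + 1 : ℕ) : ℂ)) (sg (ε j)) (a + j) (a + (j + 1 : ℕ))

lemma psiProd_cons (τ : ℂ) (r : ℝ) (u : ℂ) {k : ℕ} (e : Bool) (ε : Fin k → Bool) (a : ℤ) :
    psiProd τ r u (Fin.cons e ε : Fin (k + 1) → Bool) a =
      psi τ r (u + k) (sg e) a (a + 1) * psiProd τ r u ε (a + 1) := by
  rw [psiProd, Fin.prod_univ_succ, psiProd]
  simp only [Fin.val_zero, Fin.val_succ, Fin.cons_zero, Fin.cons_succ]
  push_cast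
  ring_nf

theorem sum_dualPathSum_mul_psiProd (τ : ℂ) (r : ℝ) (u : ℂ) (k : ℕ) (a b c : ℤ) :
    ∑ ε : Fin k → Bool, dualPathSum τ r u (List.ofFn ε) b c * psiProd τ r u ε a =
      pathSum τ r u k a b c := by
  induction k generalizing a b with
  | zero => simp [dualPathSum, pathSum, psiProd]
  | succ k ih =>
    simp only [sum_fin_succ_pi, pathSum, stepWeight, ← ih, List.ofFn_succ, Fin.cons_zero,
      Fin.cons_succ, dualPathSum, psiProd_cons, List.length_ofFn]
    simp only [Fintype.sum_bool, mul_sum, ← sum_add_distrib]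
    exact sum_congr rfl fun ε _ => by ring

lemma sum_sg_eq_sub_two_mul_count {k : ℕ} (ε : Fin k → Bool) :
    ∑ j, sg (ε j) = k - 2 * (List.ofFn ε).count false := by
  induction k with
  | zero => simp
  | succ k ih =>
    rw [Fin.sum_univ_succ, ih, List.ofFn_succ]
    cases ε 0 <;> simp [sg] <;> ring

lemma ofFn_decide_lt_eq_append {k i : ℕ} (hi : i ≤ k) :
    List.ofFn (fun j : Fin k => decide ((j : ℕ) < k - i)) =
      List.replicate (k - i) true ++ List.replicate i false := by
  refine List.ext_getElem (by simp [hi]) fun j _ _ => ?_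
  simp [List.getElem_append]

lemma perm_of_length_eq_of_count_false_eq {l₁ l₂ : List Bool} (hlen : l₁.length = l₂.length)
    (hcount : l₁.count false = l₂.count false) : l₁.Perm l₂ := by
  have h₁ := List.count_false_add_count_true l₁
  have h₂ := List.count_false_add_count_true l₂
  exact List.perm_iff_count.2 fun e => by cases e <;> omega

lemma psiStarF_eq_dualPathSum (τ : ℂ) (r : ℝ) {k i : ℕ} (hi : i ≤ k) (u : ℂ) {b c : ℤ}
    (h : adm k b c) :
    psiStarF τ r k (k - 2 * i) u c b =
      dualPathSum τ r u (List.replicate (k - i) true ++ List.replicate i false) b c := by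
  rw [psiStarF, if_pos h, ← ofFn_decide_lt_eq_append hi, ← sum_psiStarProd]
  refine sum_congr rfl fun δ _ => prod_congr rfl fun j _ => ?_
  congr 1
  simp only [sg, decide_eq_true_eq]
  congr 1
  apply propext
  omega

lemma psiF_eq_sum_psiProd (τ : ℂ) (r : ℝ) (k : ℕ) (μ : ℤ) (u : ℂ) (a : ℤ) :
    psiF τ r k μ u a (a + k) = ∑ ε : Fin k → Bool with ∑ j, sg (ε j) = μ, psiProd τ r u ε a := by
  have hadm : adm k a (a + k) := by constructor <;> omega
  have hlen : ((k : ℤ) - (a - (a + k))) / 2 = k := by omega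
  rw [psiF, if_pos hadm, hlen]
  refine sum_congr rfl fun ε _ => prod_congr rfl fun j _ => ?_
  rw [cpathZ, cpathZ, if_pos (by omega), if_pos (by omega)]

theorem sum_psiStarF_mul_psiF_eq_pathSum (hτ : 0 < τ.im) (hr : 0 < r) {k : ℕ} (u : ℂ) (a : ℤ)
    {b c : ℤ} (h : adm k b c) (hb : ∀ s : ℤ, |s - b| ≤ k → br τ r s ≠ 0) :
    ∑ i ∈ range (k + 1), psiStarF τ r k (k - 2 * i) u c b * psiF τ r k (k - 2 * i) u a (a + k) =
      pathSum τ r u k a b c := by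
  have hmaps (ε : Fin k → Bool) (_ : ε ∈ univ) : (List.ofFn ε).count false ∈ range (k + 1) := by
    rw [mem_range_succ_iff]
    exact List.count_le_length.trans_eq (List.length_ofFn)
  rw [← sum_dualPathSum_mul_psiProd, ← sum_fiberwise_of_maps_to hmaps]
  refine sum_congr rfl fun i hi => ?_
  rw [mem_range_succ_iff] at hi
  have hcount (ε : Fin k → Bool) :
      ∑ j, sg (ε j) = k - 2 * i ↔ (List.ofFn ε).count false = i := by
    rw [sum_sg_eq_sub_two_mul_count]; omega
  simp only [psiStarF_eq_dualPathSum τ r hi u h, psiF_eq_sum_psiProd, mul_sum, hcount]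
  refine sum_congr rfl fun ε hε => ?_
  rw [mem_filter] at hε
  congr 1
  refine dualPathSum_perm hτ hr u (perm_of_length_eq_of_count_false_eq ?_ ?_) b c ?_
  · simp [hi]
  · simp [hε.2, List.count_replicate]
  · simpa [hi] using hb

end Fusion

theorem binomial_coeff_via_intertwiners_general {τ : ℂ} {r : ℝ} (hτ : 0 < τ.im) (hr : 0 < r)
    {k n : ℕ} (hn : n ≤ k) (a : ℤ) {b c : ℤ} (hbc : b - c = (k : ℤ) - 2 * n) (u : ℂ)
    (hb : ∀ s : ℤ, |s - b| ≤ (k : ℤ) → br τ r (s : ℂ) ≠ 0)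
    (hC : CdenomNZ τ r k n ((-u + (b : ℂ) - (k : ℂ) + 1) / 2)
      ((-u - (b : ℂ) - (k : ℂ) + 1) / 2)) :
    ∑ i ∈ Finset.range (k + 1),
        psiStarF τ r k ((k : ℤ) - 2 * (i : ℤ)) u c b *
          psiF τ r k ((k : ℤ) - 2 * (i : ℤ)) u a (a + k) =
      Cnk τ r k n ((-u + (a : ℂ) - (k : ℂ) + 1) / 2) ((-u + (b : ℂ) - (k : ℂ) + 1) / 2)
        ((-u - (b : ℂ) - (k : ℂ) + 1) / 2) := by
  have hadm : adm k b c := by constructor <;> omega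
  have hc : c = b + n - (k - n : ℕ) := by omega
  rw [sub_eq_add_neg (-u)] at hC ⊢
  rw [sum_psiStarF_mul_psiF_eq_pathSum hτ hr u a hadm hb, hc]
  exact pathSum_eq_Cnk hτ hr u (Nat.add_sub_of_le hn) a b hb hC

/-- Elliptic binomial coefficients via intertwining vectors. -/
theorem binomial_coeff_via_intertwiners (τ : ℂ) (r : ℝ) (hτ : 0 < τ.im) (hr : 0 < r)
    (hirr : Irrational r) (k n : ℕ) (hk : 1 ≤ k) (hn : n ≤ k)
    (a b c : ℤ) (hbc : b - c = (k : ℤ) - 2 * n) (hmin : (k : ℤ) < min b c)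
    (u : ℂ)
    (hb : ∀ s : ℤ, |s - b| ≤ (k : ℤ) → br τ r (s : ℂ) ≠ 0)
    (hu : ∀ j : ℕ, j < k → br τ r (u + (j : ℂ)) ≠ 0)
    (hC : CdenomNZ τ r k n ((-u + (b : ℂ) - (k : ℂ) + 1) / 2)
      ((-u - (b : ℂ) - (k : ℂ) + 1) / 2)) :
    ∑ i ∈ Finset.range (k + 1),
        psiStarF τ r k ((k : ℤ) - 2 * (i : ℤ)) u c b *
          psiF τ r k ((k : ℤ) - 2 * (i : ℤ)) u a (a + k) =
      Cnk τ r k n ((-u + (a : ℂ) - (k : ℂ) + 1) / 2) ((-u + (b : ℂ) - (k : ℂ) + 1) / 2)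
        ((-u - (b : ℂ) - (k : ℂ) + 1) / 2) := by
  exact binomial_coeff_via_intertwiners_general hτ hr hn a hbc u hb hC

end Ell
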